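/- For every integer g ≥ 1 there exist φ̃₁, …, φ̃_{2g} ∈ 𝒯 such that for every t ∈ ℝ, ([φ̃₁, φ̃₂] ∘ [φ̃₃, φ̃₄] ∘ ⋯ ∘ [φ̃_{2g−1}, φ̃_{2g}])(t) − t < 2 − 2g. -/

import Mathlib

/-- `ψ` belongs to `𝒯`: it is an increasing homeomorphism of `ℝ` (an order
isomorphism of `ℝ`, which is automatically a homeomorphism) commuting with the
translation `t ↦ t + 1`, i.e. a lift of an orientation-preserving circle
homeomorphism. -/
def CircleLift (ψ : ℝ ≃o ℝ) : Prop := ∀ t : ℝ, ψ (t + 1) = ψ t + 1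

/-- The composition `ψ₁ ∘ ψ₂ ∘ ⋯ ∘ ψ_k` of a list `[ψ₁, ψ₂, …, ψ_k]`. -/
def composeList (L : List (ℝ ≃o ℝ)) : ℝ ≃o ℝ :=
  L.foldr (fun f acc => acc.trans f) (OrderIso.refl ℝ)

/-- The commutator `[f, g] = f ∘ g ∘ f⁻¹ ∘ g⁻¹`. -/
def commOI (f g : ℝ ≃o ℝ) : ℝ ≃o ℝ := (g.symm.trans f.symm).trans (g.trans f)

/-- The steep building block on the unit interval. -/
noncomputable def moebU (k u : ℝ) : ℝ := u / (u + k * (1 - u))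

theorem moebU_den {k u : ℝ} (hk : 0 < k) (h0 : 0 ≤ u) (h1 : u < 1) : 0 < u + k * (1 - u) := by
  have : 0 < k * (1 - u) := mul_pos hk (by linarith)
  linarith

theorem moebU_nonneg {k u : ℝ} (hk : 0 < k) (h0 : 0 ≤ u) (h1 : u < 1) : 0 ≤ moebU k u :=
  div_nonneg h0 (moebU_den hk h0 h1).le

theorem moebU_lt_one {k u : ℝ} (hk : 0 < k) (h0 : 0 ≤ u) (h1 : u < 1) : moebU k u < 1 := by
  rw [moebU, div_lt_one (moebU_den hk h0 h1)]
  have : 0 < k * (1 - u) := mul_pos hk (by linarith)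
  linarith

theorem moebU_lt {k u v : ℝ} (hk : 0 < k) (h0 : 0 ≤ u) (huv : u < v) (h1 : v < 1) :
    moebU k u < moebU k v := by
  rw [moebU, moebU, div_lt_div_iff₀ (moebU_den hk h0 (by linarith))
    (moebU_den hk (by linarith) h1)]
  nlinarith [mul_pos hk (sub_pos.2 huv)]

theorem moebU_inv {k u : ℝ} (hk : 0 < k) (h0 : 0 ≤ u) (h1 : u < 1) :
    moebU k⁻¹ (moebU k u) = u := by
  have hd := (moebU_den hk h0 h1).ne'
  have e : 1 - moebU k u = k * (1 - u) / (u + k * (1 - u)) := by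
    rw [moebU]; field_simp; ring
  rw [moebU, e, moebU]
  have e2 : u / (u + k * (1 - u)) + k⁻¹ * (k * (1 - u) / (u + k * (1 - u)))
      = 1 / (u + k * (1 - u)) := by
    field_simp; ring
  rw [e2]
  field_simp

/-- The periodic extension. -/
noncomputable def moebP (k t : ℝ) : ℝ := ⌊t⌋ + moebU k (Int.fract t)

theorem moebP_inv {k : ℝ} (hk : 0 < k) (t : ℝ) : moebP k⁻¹ (moebP k t) = t := by
  have h0 := Int.fract_nonneg t
  have h1 := Int.fract_lt_one t
  have a0 := moebU_nonneg hk h0 h1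
  have a1 := moebU_lt_one hk h0 h1
  have hfl : ⌊moebP k t⌋ = ⌊t⌋ := by
    rw [Int.floor_eq_iff, moebP]; constructor <;> linarith
  have hfr : Int.fract (moebP k t) = moebU k (Int.fract t) := by
    rw [Int.fract, hfl, moebP]; ring
  rw [moebP, hfl, hfr, moebU_inv hk h0 h1, Int.floor_add_fract]

theorem moebP_strictMono {k : ℝ} (hk : 0 < k) : StrictMono (moebP k) := by
  intro s t hst
  have hs0 := Int.fract_nonneg s
  have hs1 := Int.fract_lt_one s
  have ht0 := Int.fract_nonneg t
  have ht1 := Int.fract_lt_one t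
  rcases (Int.floor_mono hst.le).eq_or_lt with h | h
  · have : Int.fract s < Int.fract t := by
      rw [Int.fract, Int.fract, h]; linarith
    have := moebU_lt hk hs0 this ht1
    rw [moebP, moebP, h]; linarith
  · have h' : (⌊s⌋ : ℝ) + 1 ≤ ⌊t⌋ := by exact_mod_cast h
    have := moebU_lt_one hk hs0 hs1
    have := moebU_nonneg hk ht0 ht1
    rw [moebP, moebP]; linarith

/-- The periodic extension as an order isomorphism. -/
noncomputable def moebIso (k : ℝ) (hk : 0 < k) : ℝ ≃o ℝ :=
  StrictMono.orderIsoOfRightInverse (moebP k) (moebP_strictMono hk) (moebP k⁻¹) (by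
    intro t
    have := moebP_inv (inv_pos.2 hk) t
    rwa [inv_inv] at this)

theorem moebIso_lift (k : ℝ) (hk : 0 < k) : CircleLift (moebIso k hk) := by
  intro t
  change moebP k (t + 1) = moebP k t + 1
  simp only [moebP, Int.floor_add_one, Int.fract_add_one]
  push_cast; ring

theorem CircleLift.symm' {f : ℝ ≃o ℝ} (hf : CircleLift f) : CircleLift f.symm := by
  intro t
  rw [OrderIso.symm_apply_eq, hf, OrderIso.apply_symm_apply]

theorem CircleLift.trans' {f g : ℝ ≃o ℝ} (hf : CircleLift f) (hg : CircleLift g) :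
    CircleLift (f.trans g) := by
  intro t
  simp only [OrderIso.trans_apply, hf t, hg (f t)]

theorem CircleLift.addRight' (s : ℝ) : CircleLift (OrderIso.addRight s) := by
  intro t
  simp only [OrderIso.addRight_apply]; ring

theorem CircleLift.comm' {f g : ℝ ≃o ℝ} (hf : CircleLift f) (hg : CircleLift g) :
    CircleLift (commOI f g) :=
  (hg.symm'.trans' hf.symm').trans' (hg.trans' hf)

theorem CircleLift.add_int {f : ℝ ≃o ℝ} (hf : CircleLift f) (t : ℝ) (m : ℤ) :
    f (t + m) = f t + m := by
  induction m using Int.induction_on with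
  | zero => simp
  | succ n ih =>
    push_cast at ih ⊢
    rw [← add_assoc, hf, ih]; ring
  | pred n ih =>
    push_cast at ih ⊢
    have := hf (t + (-n - 1))
    rw [show t + (-(n : ℝ) - 1) + 1 = t + -n by ring, ih] at this
    linarith

/-- Conjugation by a translation. -/
noncomputable def conjT (s : ℝ) (f : ℝ ≃o ℝ) : ℝ ≃o ℝ :=
  ((OrderIso.addRight s).symm.trans f).trans (OrderIso.addRight s)

theorem CircleLift.conjT' {f : ℝ ≃o ℝ} (hf : CircleLift f) (s : ℝ) : CircleLift (conjT s f) :=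
  ((CircleLift.addRight' s).symm'.trans' hf).trans' (CircleLift.addRight' s)

theorem comm_conjT (s : ℝ) (f g : ℝ ≃o ℝ) :
    commOI (conjT s f) (conjT s g) = conjT s (commOI f g) := by
  ext t
  simp [commOI, conjT, OrderIso.symm_trans]

theorem conjT_apply (s : ℝ) (f : ℝ ≃o ℝ) (t : ℝ) : conjT s f t = f (t - s) + s := by
  simp [conjT, sub_eq_add_neg]

/-- A commutator with displacement close to `-2` at one point. -/
theorem exists_deep_comm (a : ℝ) (ha : 0 < a) (ha1 : a < 1) :
    ∃ f g : ℝ ≃o ℝ, CircleLift f ∧ CircleLift g ∧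
      ∃ y, commOI f g y ≤ y - 2 + 4 * a := by
  have hk : 0 < a ^ 2 := by positivity
  set P := moebIso (a ^ 2) hk with hP
  have hPl : CircleLift P := moebIso_lift _ _
  have hP0 : P 0 = 0 := by
    change moebP (a ^ 2) 0 = 0
    simp [moebP, moebU]
  have hPa : 1 - a ≤ P a := by
    change 1 - a ≤ moebP (a ^ 2) a
    have hfl : ⌊a⌋ = 0 := by rw [Int.floor_eq_iff]; constructor <;> push_cast <;> linarith
    have hfr : Int.fract a = a := by rw [Int.fract, hfl]; simp
    rw [moebP, hfr, hfl, moebU, Int.cast_zero, zero_add,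
      le_div_iff₀ (moebU_den hk ha.le ha1)]
    have : a - (1 - a) * (a + a ^ 2 * (1 - a)) = a ^ 3 * (2 - a) := by ring
    have : 0 ≤ a ^ 3 * (2 - a) := mul_nonneg (by positivity) (by linarith)
    linarith
  have hPi0 : P.symm 0 = 0 := by rw [OrderIso.symm_apply_eq, hP0]
  have hPia : P.symm (-a) ≤ a - 1 := by
    have h1 := hPl.symm' (-a)
    have h2 : P.symm (-a + 1) ≤ a := by
      rw [OrderIso.symm_apply_le]; linarith
    linarith
  refine ⟨P.symm.trans (OrderIso.addRight a), P.trans (OrderIso.addRight (-a)),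
    hPl.symm'.trans' (CircleLift.addRight' _), hPl.trans' (CircleLift.addRight' _),
    P a + -a, ?_⟩
  have e : commOI (P.symm.trans (OrderIso.addRight a)) (P.trans (OrderIso.addRight (-a)))
      (P a + -a) = P.symm (-a) + a := by
    simp [commOI, OrderIso.symm_trans, hP0]
  rw [e]
  linarith

theorem composeList_cons (f : ℝ ≃o ℝ) (L : List (ℝ ≃o ℝ)) (t : ℝ) :
    composeList (f :: L) t = f (composeList L t) := rfl

theorem composeList_lift (L : List (ℝ ≃o ℝ)) (h : ∀ f ∈ L, CircleLift f) :
    CircleLift (composeList L) := by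
  induction L with
  | nil => intro t; rfl
  | cons f L ih =>
    intro t
    rw [composeList_cons, composeList_cons, ih (fun x hx => h x (List.mem_cons_of_mem _ hx)) t,
      h f List.mem_cons_self]

theorem compose_bound (c : ℝ ≃o ℝ) (hc : CircleLift c) (e y : ℝ) (hy : c y ≤ y - 2 + e) (n : ℕ) :
    ∀ j : ℕ, composeList (List.ofFn fun i : Fin n => conjT (-(((j + i.1 : ℕ) : ℝ) * e)) c)
      (y - ((j : ℝ) + n - 1) * e) ≤ y - ((j : ℝ) - 1) * e - 2 * n := by
  induction n with
  | zero => intro j; simp [composeList]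
  | succ n ih =>
    intro j
    rw [List.ofFn_succ, composeList_cons]
    have h := ih (j + 1)
    have e1 : (fun i : Fin n => conjT (-(((j + (Fin.succ i).1 : ℕ) : ℝ) * e)) c)
        = fun i : Fin n => conjT (-(((j + 1 + i.1 : ℕ) : ℝ) * e)) c := by
      funext i
      rw [Fin.val_succ, show j + (i.1 + 1) = j + 1 + i.1 by ring]
    rw [e1]
    have e2 : y - ((j : ℝ) + ((n + 1 : ℕ) : ℝ) - 1) * e
        = y - (((j + 1 : ℕ) : ℝ) + n - 1) * e := by push_cast; ring
    rw [e2]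
    refine (OrderIso.monotone _ h).trans ?_
    rw [conjT_apply]
    have hm := hc.add_int y (-(2 * n : ℤ))
    have e3 : y - (((j + 1 : ℕ) : ℝ) - 1) * e - 2 * n - -(((j + (0 : Fin (n + 1)).1 : ℕ) : ℝ) * e)
        = y + ((-(2 * n : ℤ) : ℤ) : ℝ) := by
      push_cast [Fin.val_zero]; ring
    rw [e3, hm]
    push_cast [Fin.val_zero]
    linarith

/-- For every integer `g ≥ 1` there exist `φ̃₁, …, φ̃_{2g} ∈ 𝒯` such that for
every real `t`, `([φ̃₁, φ̃₂] ∘ ⋯ ∘ [φ̃_{2g-1}, φ̃_{2g}]) t - t < 2 - 2g`. -/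
theorem exists_commutator_product_lt (g : ℕ) (hg : 1 ≤ g) :
    ∃ φ : Fin (2 * g) → ℝ ≃o ℝ, (∀ i, CircleLift (φ i)) ∧
      ∀ t : ℝ,
        composeList (List.ofFn fun i : Fin g =>
            commOI (φ ⟨2 * i.1, by have := i.2; omega⟩)
              (φ ⟨2 * i.1 + 1, by have := i.2; omega⟩)) t - t
          < 2 - 2 * g := by
  have hg0 : (1 : ℝ) ≤ g := by exact_mod_cast hg
  obtain ⟨f, k, hf, hk, y, hy⟩ := exists_deep_comm (1 / (4 * g)) (by positivity) (by
    rw [div_lt_one (by positivity)]; linarith)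
  have he : 4 * (1 / (4 * (g : ℝ))) = 1 / g := by field_simp
  rw [he] at hy
  set e : ℝ := 1 / g with hedef
  have hge : (g : ℝ) * e = 1 := by rw [hedef]; field_simp
  have hc := hf.comm' hk
  refine ⟨fun i => conjT (-(((i.1 / 2 : ℕ) : ℝ) * e)) (if i.1 % 2 = 0 then f else k), ?_, ?_⟩
  · intro i
    apply CircleLift.conjT'
    split_ifs <;> assumption
  · have hL : (List.ofFn fun i : Fin g =>
        commOI (conjT (-(((2 * i.1 / 2 : ℕ) : ℝ) * e)) (if (2 * i.1) % 2 = 0 then f else k))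
          (conjT (-((((2 * i.1 + 1) / 2 : ℕ) : ℝ) * e))
            (if (2 * i.1 + 1) % 2 = 0 then f else k)))
        = List.ofFn fun i : Fin g => conjT (-(((0 + i.1 : ℕ) : ℝ) * e)) (commOI f k) := by
      congr 1
      funext i
      rw [if_pos (by omega), if_neg (by omega), show 2 * i.1 / 2 = 0 + i.1 by omega,
        show (2 * i.1 + 1) / 2 = 0 + i.1 by omega, comm_conjT]
    intro t
    simp only []
    rw [hL]
    have hb := compose_bound (commOI f k) hc e y hy g 0
    have hl := composeList_lift (List.ofFn fun i : Fin g =>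
      conjT (-(((0 + i.1 : ℕ) : ℝ) * e)) (commOI f k)) (by
        intro x hx
        rw [List.mem_ofFn] at hx
        obtain ⟨i, rfl⟩ := hx
        exact hc.conjT' _)
    set C := composeList (List.ofFn fun i : Fin g =>
      conjT (-(((0 + i.1 : ℕ) : ℝ) * e)) (commOI f k)) with hC
    set w : ℝ := y - (((0 : ℕ) : ℝ) + g - 1) * e with hw
    have h1 := hl.add_int w ⌈t - w⌉
    have h2 : C t ≤ C (w + ⌈t - w⌉) := C.monotone (by linarith [Int.le_ceil (t - w)])
    have h3 := Int.ceil_lt_add_one (t - w)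
    have h4 : w = y - 1 + e := by rw [hw]; push_cast; linarith
    push_cast at hb
    linarith
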